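/- (Regret relative to the tightened feasible set.) Under (A1)–(A4), for any step size η > 0 and tightening parameter ρ ∈ [0, ε], the iterates x_1, …, x_T of the algorithm satisfy, for every point x*_ρ ∈ X_ρ: ∑_{t=1}^T (f_t(x_t) − f_t(x*_ρ)) ≤ 2R²/η + (η/2)·G_f²·T. -/

import Mathlib

open scoped RealInnerProductSpace Classical

noncomputable def projBall {d : ℕ} (R : ℝ) (v : EuclideanSpace ℝ (Fin d)) :
    EuclideanSpace ℝ (Fin d) := (R / max R ‖v‖) • v

def IsSubgradAt {d : ℕ} (g : EuclideanSpace ℝ (Fin d) → ℝ)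
    (x s : EuclideanSpace ℝ (Fin d)) : Prop :=
  ∀ y, g x + ⟪s, y - x⟫ ≤ g y


lemma projBall_mem {d : ℕ} {R : ℝ} (hR : 0 < R) (v : EuclideanSpace ℝ (Fin d)) :
    ‖projBall R v‖ ≤ R := by
  unfold projBall
  have hm : 0 < max R ‖v‖ := lt_max_of_lt_left hR
  rw [norm_smul, Real.norm_of_nonneg (by positivity), div_mul_eq_mul_div, div_le_iff₀ hm]
  exact mul_le_mul_of_nonneg_left (le_max_right _ _) hR.le

lemma projBall_dist {d : ℕ} {R : ℝ} (hR : 0 < R) (v z : EuclideanSpace ℝ (Fin d))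
    (hz : ‖z‖ ≤ R) : ‖projBall R v - z‖ ^ 2 ≤ ‖v - z‖ ^ 2 := by
  unfold projBall
  rcases le_total ‖v‖ R with h | h
  · rw [max_eq_left h, div_self hR.ne', one_smul]
  · rw [max_eq_right h]
    have hv : 0 < ‖v‖ := lt_of_lt_of_le hR h
    obtain ⟨c, hc⟩ : ∃ c, c = R / ‖v‖ := ⟨_, rfl⟩
    have hcR : c * ‖v‖ = R := by rw [hc]; field_simp
    have hc0 : 0 ≤ c := by rw [hc]; positivity
    have hc1 : c ≤ 1 := by rw [hc]; exact (div_le_one hv).2 h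
    rw [← hc, @norm_sub_sq_real, @norm_sub_sq_real, norm_smul, real_inner_smul_left,
      Real.norm_of_nonneg hc0]
    have h1 : ⟪v, z⟫ ≤ ‖v‖ * R :=
      (real_inner_le_norm v z).trans (mul_le_mul_of_nonneg_left hz hv.le)
    have h2 : (1 - c) * ⟪v, z⟫ ≤ (1 - c) * (‖v‖ * (c * ‖v‖)) := by
      rw [hcR]; exact mul_le_mul_of_nonneg_left h1 (by linarith)
    nlinarith [mul_nonneg (sq_nonneg (1 - c)) (sq_nonneg ‖v‖)]

lemma halfspace_dist {d : ℕ} (y z s : EuclideanSpace ℝ (Fin d)) (hs : s ≠ 0) (h : ℝ)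
    (hle : h ≤ ⟪s, y - z⟫) : ‖y - (max h 0 / ‖s‖ ^ 2) • s - z‖ ^ 2 ≤ ‖y - z‖ ^ 2 := by
  rcases le_total h 0 with h0 | h0
  · rw [max_eq_right h0]; simp
  · rw [max_eq_left h0]
    have hn : 0 < ‖s‖ := norm_pos_iff.2 hs
    obtain ⟨c, hc⟩ : ∃ c, c = h / ‖s‖ ^ 2 := ⟨_, rfl⟩
    have hcR : c * ‖s‖ ^ 2 = h := by rw [hc]; field_simp
    have hc0 : 0 ≤ c := by rw [hc]; positivity
    rw [← hc, show y - c • s - z = (y - z) - c • s by abel, norm_sub_sq_real (y - z) (c • s),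
      norm_smul, real_inner_smul_right, real_inner_comm, Real.norm_of_nonneg hc0, mul_pow]
    have := mul_le_mul_of_nonneg_left hle hc0
    nlinarith [mul_nonneg hc0 h0]

lemma grad_ineq {d : ℕ} (f : EuclideanSpace ℝ (Fin d) → ℝ) (hf : ConvexOn ℝ Set.univ f)
    (hd : Differentiable ℝ f) (x z : EuclideanSpace ℝ (Fin d)) :
    f x - f z ≤ ⟪gradient f x, x - z⟫ := by
  have hc : ConvexOn ℝ Set.univ (f ∘ AffineMap.lineMap (k := ℝ) x z) := by
    simpa using hf.comp_affineMap (AffineMap.lineMap (k := ℝ) x z)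
  have hg := (hd x).hasGradientAt.hasFDerivAt
  have hder : HasDerivAt (f ∘ AffineMap.lineMap (k := ℝ) x z) (⟪gradient f x, z - x⟫) 0 := by
    have h1 : HasDerivAt (AffineMap.lineMap (k := ℝ) x z) (z - x) (0 : ℝ) :=
      AffineMap.hasDerivAt_lineMap
    have h2 : HasFDerivAt f (InnerProductSpace.toDual ℝ _ (gradient f x))
      (AffineMap.lineMap (k := ℝ) x z (0 : ℝ)) := by simpa using hg
    simpa using h2.comp_hasDerivAt (0 : ℝ) h1
  have := hc.le_slope_of_hasDerivAt (Set.mem_univ 0) (Set.mem_univ 1) one_pos hder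
  simp only [slope_def_field, Function.comp_apply, AffineMap.lineMap_apply_one, AffineMap.lineMap_apply_zero, sub_zero, div_one] at this
  rw [← neg_sub z x, inner_neg_right]
  linarith

theorem stmt14 {d T : ℕ} (hT : 1 ≤ T)
    {R Gf Gg ε σ η ρ : ℝ}
    (g : EuclideanSpace ℝ (Fin d) → ℝ)
    (f : ℕ → EuclideanSpace ℝ (Fin d) → ℝ)
    (x y s : ℕ → EuclideanSpace ℝ (Fin d))
    (hR : 0 < R) (hGf : 0 < Gf) (hGg : 0 < Gg)
    (hgconv : ConvexOn ℝ Set.univ g)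
    (hA1 : {z : EuclideanSpace ℝ (Fin d) | g z ≤ 0} ⊆ Metric.closedBall 0 R)
    (hfconv : ∀ t ∈ Finset.Icc 1 T, ConvexOn ℝ Set.univ (f t))
    (hfdiff : ∀ t ∈ Finset.Icc 1 T, Differentiable ℝ (f t))
    (hA2 : ∀ t ∈ Finset.Icc 1 T, ∀ z ∈ Metric.closedBall (0 : EuclideanSpace ℝ (Fin d)) R,
      ‖gradient (f t) z‖ ≤ Gf)
    (hA3 : ∀ z ∈ Metric.closedBall (0 : EuclideanSpace ℝ (Fin d)) R,
      ∀ sz, IsSubgradAt g z sz → ‖sz‖ ≤ Gg)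
    (hσ : 0 < σ) (hε : 0 < ε) (hσGg : σ ≤ Gg)
    (hA4ne : ∃ z, g z = -ε)
    (hA4 : ∀ z : EuclideanSpace ℝ (Fin d), g z = -ε → ∀ sz, IsSubgradAt g z sz → σ ≤ ‖sz‖)
    (hη : 0 < η) (hρ0 : 0 ≤ ρ) (hρε : ρ ≤ ε)
    (hx1 : x 1 ∈ Metric.closedBall (0 : EuclideanSpace ℝ (Fin d)) R)
    (hs : ∀ t ∈ Finset.Icc 1 T, IsSubgradAt g (x t) (s t))
    (hy : ∀ t ∈ Finset.Icc 1 T, y t = x t - η • gradient (f t) (x t))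
    (hupd : ∀ t ∈ Finset.Icc 1 T,
      x (t + 1) = if s t ≠ 0 then
          projBall R (y t - ((max (g (x t) + ⟪s t, y t - x t⟫ + ρ) 0) / ‖s t‖ ^ 2) • s t)
        else projBall R (y t))
    :
    ∀ xrho : EuclideanSpace ℝ (Fin d), g xrho ≤ -ρ →
      ∑ t ∈ Finset.Icc 1 T, (f t (x t) - f t xrho) ≤
        2 * R ^ 2 / η + η / 2 * Gf ^ 2 * T := by
  intro z hz
  have hzR : ‖z‖ ≤ R := by
    have := hA1 (show g z ≤ 0 by linarith)
    simpa using this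
  have hxR : ∀ t ∈ Finset.Icc 1 (T + 1), ‖x t‖ ≤ R := by
    intro t ht
    obtain ⟨h1, h2⟩ := Finset.mem_Icc.1 ht
    obtain ⟨k, rfl⟩ : ∃ k, t = k + 1 := ⟨t - 1, by omega⟩
    rcases Nat.eq_zero_or_pos k with rfl | hk
    · simpa using hx1
    · rw [hupd k (Finset.mem_Icc.2 ⟨hk, by omega⟩)]
      split_ifs <;> exact projBall_mem hR _
  have step : ∀ t ∈ Finset.Icc 1 T, 2 * η * (f t (x t) - f t z) ≤
      ‖x t - z‖ ^ 2 - ‖x (t + 1) - z‖ ^ 2 + η ^ 2 * Gf ^ 2 := by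
    intro t ht
    have ht' := Finset.mem_Icc.1 ht
    have hxt := hxR t (Finset.mem_Icc.2 ⟨ht'.1, by omega⟩)
    have hG := hA2 t ht (x t) (by simpa using hxt)
    have hgr := grad_ineq (f t) (hfconv t ht) (hfdiff t ht) (x t) z
    have h1 : ‖x (t + 1) - z‖ ^ 2 ≤ ‖y t - z‖ ^ 2 := by
      rw [hupd t ht]
      split_ifs with h
      · refine (projBall_dist hR _ z hzR).trans (halfspace_dist _ _ _ h _ ?_)
        have h3 := hs t ht z
        have h4 : ⟪s t, y t - z⟫ = ⟪s t, y t - x t⟫ - ⟪s t, z - x t⟫ := by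
          rw [← inner_sub_right]; congr 1; abel
        linarith
      · exact projBall_dist hR _ z hzR
    have h2 : ‖y t - z‖ ^ 2 = ‖x t - z‖ ^ 2 - 2 * η * ⟪gradient (f t) (x t), x t - z⟫
        + η ^ 2 * ‖gradient (f t) (x t)‖ ^ 2 := by
      rw [hy t ht, show x t - η • gradient (f t) (x t) - z
        = (x t - z) - η • gradient (f t) (x t) by abel, @norm_sub_sq_real, norm_smul,
        real_inner_smul_right, real_inner_comm, Real.norm_of_nonneg hη.le]
      ring
    have h3 : ‖gradient (f t) (x t)‖ ^ 2 ≤ Gf ^ 2 := pow_le_pow_left₀ (norm_nonneg _) hG 2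
    have h4 := mul_le_mul_of_nonneg_left h3 (sq_nonneg η)
    have h5 := mul_le_mul_of_nonneg_left hgr (show 0 ≤ 2 * η by positivity)
    linarith
  have tele : ∀ n ≤ T, 2 * η * ∑ t ∈ Finset.Icc 1 n, (f t (x t) - f t z) ≤
      ‖x 1 - z‖ ^ 2 - ‖x (n + 1) - z‖ ^ 2 + η ^ 2 * Gf ^ 2 * n := by
    intro n
    induction n with
    | zero => intro _; simp
    | succ n ih =>
      intro hn
      have h1 := ih (by omega)
      have h2 := step (n + 1) (Finset.mem_Icc.2 ⟨by omega, hn⟩)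
      rw [Finset.sum_Icc_succ_top (by omega), mul_add]
      push_cast
      linarith
  have hfin := tele T le_rfl
  have hx1' : ‖x 1 - z‖ ^ 2 ≤ (2 * R) ^ 2 := by
    apply pow_le_pow_left₀ (norm_nonneg _)
    have h1 : ‖x 1‖ ≤ R := by simpa using hx1
    linarith [norm_sub_le (x 1) z]
  have hE : 2 * η * (2 * R ^ 2 / η + η / 2 * Gf ^ 2 * T) = 4 * R ^ 2 + η ^ 2 * Gf ^ 2 * T := by
    field_simp
    ring
  refine le_of_mul_le_mul_left ?_ (show 0 < 2 * η by positivity)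
  rw [hE]
  nlinarith [sq_nonneg ‖x (T + 1) - z‖]
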